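/- Let (W,S) be a Coxeter system, J ⊆ S, and σ, ω ∈ W with ᴶσ = ᴶω (i.e. W_J σ = W_J ω). Then for every z ∈ W with σ ≤ z ≤ ω in the Bruhat order, ᴶz = ᴶσ; moreover the map κ ↦ κ·ᴶσ is an order isomorphism from the Bruhat interval [σ_J, ω_J] in W_J onto the Bruhat interval [σ, ω] in W. -/

import Mathlib

/-- The Bruhat order on a Coxeter group. -/
def CoxeterSystem.bruhatLE {B W : Type*} [Group W] {M : CoxeterMatrix B}
    (cs : CoxeterSystem M W) (u v : W) : Prop :=
  Relation.ReflTransGen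
    (fun x y => (∃ t, cs.IsReflection t ∧ y = t * x) ∧ cs.length x < cs.length y) u v

/-- The Bruhat order of the Coxeter system `(W_J, J)`, expressed inside `W`:
the reflections of `(W_J, J)` are exactly the reflections of `W` lying in `W_J`,
and the length function of `(W_J, J)` is the restriction of that of `W`. -/
def CoxeterSystem.bruhatLEIn {B W : Type*} [Group W] {M : CoxeterMatrix B}
    (cs : CoxeterSystem M W) (K : Subgroup W) (u v : W) : Prop :=
  Relation.ReflTransGen
    (fun x y => (∃ t, cs.IsReflection t ∧ t ∈ K ∧ y = t * x) ∧
      cs.length x < cs.length y) u v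

/-- `m` is the minimal length representative of the coset `W_J z`. -/
def CoxeterSystem.IsMinRep {B W : Type*} [Group W] {M : CoxeterMatrix B}
    (cs : CoxeterSystem M W) (J : Set B) (z m : W) : Prop :=
  (∃ a ∈ Subgroup.closure (cs.simple '' J), m = a * z) ∧
    ∀ w, (∃ a ∈ Subgroup.closure (cs.simple '' J), w = a * z) →
      cs.length m ≤ cs.length w

namespace BruhatAux

open CoxeterSystem

variable {B W : Type*} [Group W] {M : CoxeterMatrix B} (cs : CoxeterSystem M W)

open Classical in
/-- The signed conjugation action of a simple reflection. -/
noncomputable def phi (i : B) : Function.End (W × ZMod 2) :=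
  fun p => (cs.simple i * p.1 * cs.simple i, p.2 + if p.1 = cs.simple i then 1 else 0)

lemma simple_mul_pow (i j : B) (n : ℕ) :
    cs.simple j * (cs.simple i * cs.simple j) ^ n
      = (cs.simple j * cs.simple i) ^ n * cs.simple j := by
  induction n with
  | zero => simp
  | succ n ih => rw [pow_succ, ← mul_assoc, ih, pow_succ]; simp only [mul_assoc]

lemma pow_inv (i j : B) (n : ℕ) :
    ((cs.simple i * cs.simple j) ^ n)⁻¹ = (cs.simple j * cs.simple i) ^ n := by
  rw [← inv_pow]; simp

lemma conj_eq_iff (v t x : W) : v * t * v⁻¹ = x ↔ t = v⁻¹ * x * v := by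
  constructor
  · rintro rfl; group
  · rintro rfl; group

open Classical in
lemma phi_pow (i j : B) (n : ℕ) (t : W) (e : ZMod 2) :
    ((phi cs i * phi cs j) ^ n) (t, e) =
      ((cs.simple i * cs.simple j) ^ n * t * ((cs.simple i * cs.simple j) ^ n)⁻¹,
        e + ∑ k ∈ Finset.range (2 * n),
          if t = (cs.simple j * cs.simple i) ^ k * cs.simple j then 1 else 0) := by
  induction n with
  | zero => simp; rfl
  | succ n ih =>
    have h1 : ((phi cs i * phi cs j) ^ (n + 1)) (t, e)
        = phi cs i (phi cs j (((phi cs i * phi cs j) ^ n) (t, e))) := by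
      rw [pow_succ']; rfl
    rw [h1, ih]
    set v := (cs.simple i * cs.simple j) ^ n with hv
    have hvi : v⁻¹ = (cs.simple j * cs.simple i) ^ n := pow_inv cs i j n
    have e1 : (v * t * v⁻¹ = cs.simple j) ↔
        t = (cs.simple j * cs.simple i) ^ (2 * n) * cs.simple j := by
      rw [conj_eq_iff, mul_assoc, hv, simple_mul_pow, ← hv, hvi, ← mul_assoc, ← pow_add, two_mul]
    have e2 : (cs.simple j * (v * t * v⁻¹) * cs.simple j = cs.simple i) ↔
        t = (cs.simple j * cs.simple i) ^ (2 * n + 1) * cs.simple j := by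
      have : cs.simple j * (v * t * v⁻¹) * cs.simple j
          = (cs.simple j * v) * t * (cs.simple j * v)⁻¹ := by simp [mul_assoc]
      rw [this, conj_eq_iff, mul_inv_rev, hvi, hv, simple_mul_pow, inv_simple]
      rw [show 2 * n + 1 = n + 1 + n by ring, pow_add, pow_succ]
      simp only [mul_assoc]
    have h3 : 2 * (n + 1) = 2 * n + 1 + 1 := by ring
    rw [h3, Finset.sum_range_succ, Finset.sum_range_succ, pow_succ', ← hv]
    simp only [phi, e1, e2, Prod.mk.injEq]
    exact ⟨by simp [mul_assoc], by simp only [add_assoc]⟩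

lemma phi_liftable : M.IsLiftable (phi cs) := by
  classical
  intro i j
  funext ⟨t, e⟩
  rw [phi_pow, two_mul, Finset.sum_range_add]
  have h : (cs.simple j * cs.simple i) ^ M i j = 1 := cs.simple_mul_simple_pow' i j
  simp only [pow_add, h, one_mul, simple_mul_simple_pow]
  rw [CharTwo.add_self_eq_zero]
  simp
  rfl

/-- The signed conjugation representation. -/
noncomputable def Phi : W →* Function.End (W × ZMod 2) := cs.lift ⟨phi cs, phi_liftable cs⟩

lemma Phi_mul (u v : W) (p : W × ZMod 2) : Phi cs (u * v) p = Phi cs u (Phi cs v p) := by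
  rw [map_mul]; rfl

lemma Phi_simple (i : B) : Phi cs (cs.simple i) = phi cs i := by
  simp [Phi]

open Classical in
lemma Phi_word (a : List B) (t : W) (e : ZMod 2) :
    Phi cs (cs.wordProd a) (t, e) =
      (cs.wordProd a * t * (cs.wordProd a)⁻¹, e + ((cs.rightInvSeq a).count t : ZMod 2)) := by
  induction a with
  | nil => rw [wordProd_nil, map_one]; simp; rfl
  | cons i a ih =>
    rw [wordProd_cons, Phi_mul, ih, Phi_simple]
    have h : ((cs.wordProd a)⁻¹ * cs.simple i * cs.wordProd a = t) ↔
      (cs.wordProd a * t * (cs.wordProd a)⁻¹ = cs.simple i) := by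
      rw [conj_eq_iff]; exact eq_comm
    simp only [phi, rightInvSeq, List.count_cons, beq_iff_eq, h, Prod.mk.injEq]
    refine ⟨by simp [mul_assoc], ?_⟩
    push_cast
    rw [add_assoc]

/-- The parity cocycle. -/
noncomputable def eta (w t : W) : ZMod 2 := (Phi cs w (t, 0)).2

lemma Phi_eq (w t : W) (e : ZMod 2) : Phi cs w (t, e) = (w * t * w⁻¹, e + eta cs w t) := by
  classical
  obtain ⟨a, rfl⟩ := cs.wordProd_surjective w
  rw [eta, Phi_word, Phi_word]; simp

lemma eta_mul (u v t : W) : eta cs (u * v) t = eta cs v t + eta cs u (v * t * v⁻¹) := by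
  rw [eta, Phi_mul, Phi_eq, Phi_eq]; simp

lemma eta_one (t : W) : eta cs 1 t = 0 := by
  rw [eta, map_one]; rfl

lemma eta_simple (i : B) : eta cs (cs.simple i) (cs.simple i) = 1 := by
  rw [eta, Phi_simple]; simp [phi]

lemma eta_refl {t : W} (ht : cs.IsReflection t) : eta cs t t = 1 := by
  obtain ⟨u, i, rfl⟩ := ht
  have h0 : eta cs (u * u⁻¹) (u * cs.simple i * u⁻¹) = 0 := by
    rw [mul_inv_cancel, eta_one]
  have h2 : u⁻¹ * (u * cs.simple i * u⁻¹) * u⁻¹⁻¹ = cs.simple i := by group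
  rw [eta_mul, h2] at h0
  rw [eta_mul, eta_mul, h2]
  simp only [mul_assoc, inv_simple, simple_mul_simple_self, one_mul]
  simp only [mul_assoc] at h0
  rw [eta_simple]
  linear_combination h0

lemma mem_ris_of_eta {a : List B} {t : W} (h : eta cs (cs.wordProd a) t = 1) :
    t ∈ cs.rightInvSeq a := by
  classical
  by_contra hn
  rw [eta, Phi_word, List.count_eq_zero_of_not_mem hn] at h
  simp at h

lemma inv_of_eta {w t : W} (h : eta cs w t = 1) : cs.IsRightInversion w t := by
  obtain ⟨a, ha, rfl⟩ := cs.exists_isReduced w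
  exact cs.isRightInversion_of_mem_rightInvSeq ha (mem_ris_of_eta cs h)

lemma eta_of_inv {w t : W} (h : cs.IsRightInversion w t) : eta cs w t = 1 := by
  by_contra hn
  have h0 : eta cs w t = 0 := by
    generalize eta cs w t = x at hn; revert x; decide
  have h1 : eta cs (w * t) t = 1 := by
    rw [eta_mul, eta_refl cs h.1]; simp [h0]
  exact (h.1.isRightInversion_mul_left_iff.1 (inv_of_eta cs h1)) h

/-- Strong exchange. -/
lemma strong_exchange {a : List B} {t : W} (ht : cs.IsReflection t)
    (h : cs.length (t * cs.wordProd a) < cs.length (cs.wordProd a)) :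
    ∃ k < a.length, t * cs.wordProd a = cs.wordProd (a.eraseIdx k) := by
  have h1 : cs.IsRightInversion (cs.wordProd a)⁻¹ t := cs.isRightInversion_inv_iff.2 ⟨ht, h⟩
  rw [← wordProd_reverse] at h1
  have h2 := mem_ris_of_eta cs (eta_of_inv cs h1)
  rw [rightInvSeq_reverse, List.mem_reverse] at h2
  obtain ⟨k, hk, rfl⟩ := List.mem_iff_getElem.mp h2
  refine ⟨k, by simpa using hk, ?_⟩
  rw [← List.getD_eq_getElem _ 1 hk, getD_leftInvSeq_mul_wordProd]

lemma exchange_append {a b : List B} {t : W} (ht : cs.IsReflection t)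
    (h : cs.length (t * (cs.wordProd a * cs.wordProd b))
      < cs.length (cs.wordProd a * cs.wordProd b)) :
    (∃ a' : List B, a' ⊆ a ∧ a'.length < a.length ∧
      t * (cs.wordProd a * cs.wordProd b) = cs.wordProd a' * cs.wordProd b) ∨
    (∃ b' : List B, b'.length < b.length ∧
      t * (cs.wordProd a * cs.wordProd b) = cs.wordProd a * cs.wordProd b') := by
  rw [← wordProd_append] at h
  obtain ⟨k, hk, he⟩ := strong_exchange cs ht h
  rw [wordProd_append] at he
  by_cases hka : k < a.length
  · left
    refine ⟨a.eraseIdx k, List.eraseIdx_subset, ?_, ?_⟩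
    · rw [← List.length_eraseIdx_add_one hka]; omega
    · rw [he, List.eraseIdx_append_of_lt_length hka, wordProd_append]
  · right
    push Not at hka
    have hkb : k - a.length < b.length := by rw [List.length_append] at hk; omega
    refine ⟨b.eraseIdx (k - a.length), ?_, ?_⟩
    · rw [← List.length_eraseIdx_add_one hkb]; omega
    · rw [he, List.eraseIdx_append_of_length_le hka, wordProd_append]

variable (J : Set B)

/-- The parabolic subgroup. -/
abbrev WJ : Subgroup W := Subgroup.closure (cs.simple '' J)

lemma word_mem {a : List B} (ha : ∀ i ∈ a, i ∈ J) : cs.wordProd a ∈ WJ cs J := by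
  induction a with
  | nil => simp
  | cons i a ih =>
    rw [wordProd_cons]
    refine mul_mem (Subgroup.subset_closure ⟨i, ha i (by simp), rfl⟩)
      (ih fun j hj => ha j (by simp [hj]))

lemma exists_word {x : W} (hx : x ∈ WJ cs J) :
    ∃ a : List B, (∀ i ∈ a, i ∈ J) ∧ x = cs.wordProd a := by
  induction hx using Subgroup.closure_induction with
  | mem x hx =>
    obtain ⟨i, hi, rfl⟩ := hx
    exact ⟨[i], by simpa using hi, by simp⟩
  | one => exact ⟨[], by simp, by simp⟩
  | mul x y _ _ hx hy =>
    obtain ⟨a, ha, rfl⟩ := hx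
    obtain ⟨b, hb, rfl⟩ := hy
    refine ⟨a ++ b, ?_, by rw [wordProd_append]⟩
    intro i hi
    rcases List.mem_append.1 hi with h | h
    · exact ha i h
    · exact hb i h
  | inv x _ hx =>
    obtain ⟨a, ha, rfl⟩ := hx
    exact ⟨a.reverse, by simpa using ha, by rw [wordProd_reverse]⟩

lemma exists_min_word {x : W} (hx : x ∈ WJ cs J) :
    ∃ a : List B, (∀ i ∈ a, i ∈ J) ∧ x = cs.wordProd a ∧
      ∀ b : List B, (∀ i ∈ b, i ∈ J) → cs.wordProd a = cs.wordProd b → a.length ≤ b.length := by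
  classical
  have h : ∃ n, ∃ a : List B, (∀ i ∈ a, i ∈ J) ∧ x = cs.wordProd a ∧ a.length = n := by
    obtain ⟨a, ha, h⟩ := exists_word cs J hx
    exact ⟨_, a, ha, h, rfl⟩
  obtain ⟨a, ha, hx, hl⟩ := Nat.find_spec h
  refine ⟨a, ha, hx, fun b hb hab => ?_⟩
  rw [hl]
  exact Nat.find_min' h ⟨b, hb, hx.trans hab, rfl⟩

lemma length_min_word_mul {m : W} (hm : ∀ x ∈ WJ cs J, cs.length m ≤ cs.length (x * m))
    (a : List B) (ha : ∀ i ∈ a, i ∈ J)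
    (hmin : ∀ b : List B, (∀ i ∈ b, i ∈ J) → cs.wordProd a = cs.wordProd b →
      a.length ≤ b.length) :
    cs.length (cs.wordProd a * m) = a.length + cs.length m := by
  induction a with
  | nil => simp
  | cons i a ih =>
    have hi : i ∈ J := ha i (by simp)
    have ha' : ∀ j ∈ a, j ∈ J := fun j hj => ha j (by simp [hj])
    have ih' := ih ha' (by
      intro b hb hab
      have := hmin (i :: b) (by
        intro j hj
        rcases List.mem_cons.1 hj with rfl | h
        · exact hi
        · exact hb j h) (by rw [wordProd_cons, wordProd_cons, hab])
      simpa using this)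
    rw [wordProd_cons, mul_assoc]
    rcases cs.length_simple_mul (cs.wordProd a * m) i with h | h
    · rw [h, ih', List.length_cons]; omega
    · exfalso
      obtain ⟨c, hc, hmc⟩ := cs.exists_isReduced m
      have hcl : cs.length m = c.length := by rw [hmc]; exact hc
      rw [hmc] at h
      rcases exchange_append cs (a := a) (b := c) (cs.isReflection_simple i) (by omega) with
        ⟨a', hs, hl, he⟩ | ⟨c', hl, he⟩
      · rw [← mul_assoc, mul_left_inj, ← wordProd_cons] at he
        have := hmin a' (fun j hj => ha' j (hs hj)) he
        simp at this
        omega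
      · have hmem : (cs.wordProd a)⁻¹ * cs.simple i * cs.wordProd a ∈ WJ cs J := by
          have := word_mem cs J ha'
          exact mul_mem (mul_mem (inv_mem this) (Subgroup.subset_closure ⟨i, hi, rfl⟩)) this
        have h1 := hm _ hmem
        have h2 : (cs.wordProd a)⁻¹ * cs.simple i * cs.wordProd a * m = cs.wordProd c' := by
          rw [hmc]
          simp only [mul_assoc]
          rw [he]; simp
        rw [h2] at h1
        have := cs.length_wordProd_le c'
        omega

lemma length_mul_min {m : W} (hm : ∀ x ∈ WJ cs J, cs.length m ≤ cs.length (x * m))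
    {x : W} (hx : x ∈ WJ cs J) : cs.length (x * m) = cs.length x + cs.length m := by
  obtain ⟨a, ha, rfl, hmin⟩ := exists_min_word cs J hx
  rw [length_min_word_mul cs J hm a ha hmin]
  have := length_min_word_mul cs J (m := 1) (by simp) a ha hmin
  simp at this
  omega

lemma step_coset {x y m : W} {t : W} (ht : cs.IsReflection t) (hy : y = t * x)
    (hl : cs.length x < cs.length y) {k : W} (hk : k ∈ WJ cs J) (hym : y = k * m) :
    (∃ k' ∈ WJ cs J, x = k' * m) ∨ (∃ b ∈ WJ cs J, cs.length (b * x) < cs.length m) := by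
  obtain ⟨a, ha, rfl⟩ := exists_word cs J hk
  obtain ⟨c, hc, hmc⟩ := cs.exists_isReduced m
  have hcl : cs.length m = c.length := by rw [hmc]; exact hc
  have hx : x = t * y := by rw [hy, ← mul_assoc, ht.mul_self, one_mul]
  rw [hx, hym, hmc] at hl
  rcases exchange_append cs ht hl with ⟨a', hs, _, he⟩ | ⟨c', hl', he⟩
  · left
    refine ⟨cs.wordProd a', word_mem cs J fun j hj => ha j (hs hj), ?_⟩
    rw [hx, hym, hmc, he]
  · right
    refine ⟨(cs.wordProd a)⁻¹, inv_mem hk, ?_⟩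
    rw [hx, hym, hmc, he, inv_mul_cancel_left, ← hmc, hcl]
    exact (cs.length_wordProd_le c').trans_lt hl'

lemma le_coset {x y : W} (h : cs.bruhatLE x y) {m : W} {k : W} (hk : k ∈ WJ cs J)
    (hym : y = k * m) :
    (∃ k' ∈ WJ cs J, x = k' * m) ∨ (∃ b ∈ WJ cs J, cs.length (b * x) < cs.length m) := by
  induction h using Relation.ReflTransGen.head_induction_on with
  | refl => exact Or.inl ⟨k, hk, hym⟩
  | head hs _ ih =>
    obtain ⟨⟨t, ht, he⟩, hl⟩ := hs
    rcases ih with ⟨k', hk', hx⟩ | ⟨b, hb, hlb⟩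
    · exact step_coset cs J ht he hl hk' hx
    · right
      rcases step_coset cs J ht he hl (inv_mem hb) (inv_mul_cancel_left b _).symm with
        ⟨k', hk', hx⟩ | ⟨b', hb', hlb'⟩
      · refine ⟨k'⁻¹, inv_mem hk', ?_⟩
        rw [hx, inv_mul_cancel_left]; exact hlb
      · exact ⟨b', hb', hlb'.trans hlb⟩

lemma between {m : W} (hm : ∀ x ∈ WJ cs J, cs.length m ≤ cs.length (x * m))
    {k k' z : W} (hk : k ∈ WJ cs J) (hk' : k' ∈ WJ cs J)
    (h1 : cs.bruhatLE (k * m) z) (h2 : cs.bruhatLE z (k' * m)) :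
    ∃ c ∈ WJ cs J, z = c * m := by
  rcases le_coset cs J h2 hk' rfl with h | ⟨b, hb, hl⟩
  · exact h
  · exfalso
    rcases le_coset cs J h1 (inv_mem hb) (inv_mul_cancel_left b _).symm with
      ⟨c, hc, he⟩ | ⟨c, hc, hl'⟩
    · have h3 : b * z = (c⁻¹ * k) * m := by rw [mul_assoc, he]; simp
      have := hm _ (mul_mem (inv_mem hc) hk)
      rw [← h3] at this
      omega
    · have := hm _ (mul_mem hc hk)
      rw [mul_assoc] at this
      omega

lemma lift_le {m : W} (hm : ∀ x ∈ WJ cs J, cs.length m ≤ cs.length (x * m))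
    {k' x : W} (hk' : k' ∈ WJ cs J) (h : cs.bruhatLE x (k' * m)) :
    ∀ k ∈ WJ cs J, x = k * m → cs.bruhatLEIn (WJ cs J) k k' := by
  induction h using Relation.ReflTransGen.head_induction_on with
  | refl =>
    intro k hk he
    rw [mul_left_inj] at he
    rw [he]
    exact Relation.ReflTransGen.refl
  | head hs hr ih =>
    intro k hk he
    subst he
    obtain ⟨c, hc, hz⟩ := between cs J hm hk hk' (Relation.ReflTransGen.single hs) hr
    refine Relation.ReflTransGen.head ?_ (ih c hc hz)
    obtain ⟨⟨t, ht, he⟩, hl⟩ := hs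
    rw [hz, ← mul_assoc, mul_left_inj] at he
    rw [hz, length_mul_min cs J hm hk, length_mul_min cs J hm hc] at hl
    refine ⟨⟨t, ht, ?_, he⟩, by omega⟩
    rw [show t = c * k⁻¹ by rw [he]; group]
    exact mul_mem hc (inv_mem hk)

lemma push_le {m : W} (hm : ∀ x ∈ WJ cs J, cs.length m ≤ cs.length (x * m))
    {k k' : W} (hk : k ∈ WJ cs J) (h : cs.bruhatLEIn (WJ cs J) k k') :
    k' ∈ WJ cs J ∧ cs.bruhatLE (k * m) (k' * m) := by
  induction h with
  | refl => exact ⟨hk, Relation.ReflTransGen.refl⟩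
  | tail _ hs ih =>
    obtain ⟨hb, ih⟩ := ih
    obtain ⟨⟨t, ht, htK, rfl⟩, hl⟩ := hs
    have hc := mul_mem htK hb
    refine ⟨hc, Relation.ReflTransGen.tail ih ⟨⟨t, ht, by rw [mul_assoc]⟩, ?_⟩⟩
    rw [length_mul_min cs J hm hb, length_mul_min cs J hm hc]
    omega

end BruhatAux

/-- if `ᴶσ = ᴶω =: m`, then every `z` in the Bruhat interval `[σ,ω]`
satisfies `ᴶz = m`, and `κ ↦ κ * m` is an order isomorphism from the Bruhat
interval `[σ_J, ω_J]` of `(W_J, J)` onto the Bruhat interval `[σ, ω]` of `W`. -/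
theorem stmt_5 {B W : Type*} [Group W] {M : CoxeterMatrix B}
    (cs : CoxeterSystem M W) (J : Set B) (σ ω m σJ ωJ : W)
    (hσm : cs.IsMinRep J σ m) (hωm : cs.IsMinRep J ω m)
    (hσJ : σJ ∈ Subgroup.closure (cs.simple '' J)) (hσ : σ = σJ * m)
    (hωJ : ωJ ∈ Subgroup.closure (cs.simple '' J)) (hω : ω = ωJ * m) :
    (∀ z : W, cs.bruhatLE σ z → cs.bruhatLE z ω → cs.IsMinRep J z m) ∧
    (∀ κ ∈ Subgroup.closure (cs.simple '' J),
      cs.bruhatLEIn (Subgroup.closure (cs.simple '' J)) σJ κ →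
      cs.bruhatLEIn (Subgroup.closure (cs.simple '' J)) κ ωJ →
      cs.bruhatLE σ (κ * m) ∧ cs.bruhatLE (κ * m) ω) ∧
    (∀ κ κ', κ ∈ Subgroup.closure (cs.simple '' J) →
      κ' ∈ Subgroup.closure (cs.simple '' J) →
      cs.bruhatLEIn (Subgroup.closure (cs.simple '' J)) σJ κ →
      cs.bruhatLEIn (Subgroup.closure (cs.simple '' J)) κ ωJ →
      cs.bruhatLEIn (Subgroup.closure (cs.simple '' J)) σJ κ' →
      cs.bruhatLEIn (Subgroup.closure (cs.simple '' J)) κ' ωJ →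
      (cs.bruhatLEIn (Subgroup.closure (cs.simple '' J)) κ κ' ↔
        cs.bruhatLE (κ * m) (κ' * m))) ∧
    (∀ z : W, cs.bruhatLE σ z → cs.bruhatLE z ω →
      ∃ κ ∈ Subgroup.closure (cs.simple '' J),
        cs.bruhatLEIn (Subgroup.closure (cs.simple '' J)) σJ κ ∧
        cs.bruhatLEIn (Subgroup.closure (cs.simple '' J)) κ ωJ ∧
        z = κ * m) := by
  have hm : ∀ x ∈ BruhatAux.WJ cs J, cs.length m ≤ cs.length (x * m) := by
    intro x hx
    obtain ⟨⟨a, ha, he⟩, h⟩ := hσm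
    exact h _ ⟨x * a, mul_mem hx ha, by rw [mul_assoc, ← he]⟩
  subst hσ hω
  refine ⟨?_, ?_, ?_, ?_⟩
  · intro z h1 h2
    obtain ⟨c, hc, rfl⟩ := BruhatAux.between cs J hm hσJ hωJ h1 h2
    refine ⟨⟨c⁻¹, inv_mem hc, by simp⟩, ?_⟩
    rintro w ⟨a, ha, rfl⟩
    rw [← mul_assoc]
    exact hm _ (mul_mem ha hc)
  · intro κ hκ h1 h2
    exact ⟨(BruhatAux.push_le cs J hm hσJ h1).2, (BruhatAux.push_le cs J hm hκ h2).2⟩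
  · intro κ κ' hκ hκ' _ _ _ _
    exact ⟨fun h => (BruhatAux.push_le cs J hm hκ h).2,
      fun h => BruhatAux.lift_le cs J hm hκ' h κ hκ rfl⟩
  · intro z h1 h2
    obtain ⟨c, hc, rfl⟩ := BruhatAux.between cs J hm hσJ hωJ h1 h2
    exact ⟨c, hc, BruhatAux.lift_le cs J hm hc h1 _ hσJ rfl,
      BruhatAux.lift_le cs J hm hωJ h2 _ hc rfl, rfl⟩
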